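/- arXiv:1303.2337 — 2 statements merged into one kernel-verified Lean document; each statement's English description precedes it below -/
import Mathlib

section
/- Let (X, 𝒰) be a uniform space and M ⊆ X. Then M is totally bounded if and only if every sequence (xₙ) with all xₙ ∈ M admits a Cauchy subnet; formally, M is totally bounded if and only if for every sequence x : ℕ → X with x n ∈ M for all n there exists a nontrivial (NeBot) Cauchy filter F on X with F ≤ Filter.map x Filter.atTop. -/
/-- A subset `M` of a uniform space is totally bounded iff every sequence from `M`
admits a Cauchy subnet, i.e. a nontrivial Cauchy filter finer than the filter of
the sequence. -/
theorem totallyBounded_iff_seq_cauchy_subnet {X : Type*} [UniformSpace X] (M : Set X) :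
    TotallyBounded M ↔
      ∀ x : ℕ → X, (∀ n, x n ∈ M) →
        ∃ F : Filter X, F.NeBot ∧ Cauchy F ∧ F ≤ Filter.map x Filter.atTop := by
  constructor
  · intro h x hx
    have hle : Filter.map x Filter.atTop ≤ Filter.principal M := by
      rw [Filter.le_principal_iff, Filter.mem_map]
      exact Filter.Eventually.of_forall hx
    obtain ⟨F, hF, hC⟩ := totallyBounded_iff_filter.1 h _ inferInstance hle
    exact ⟨F, hC.1, hC, hF⟩
  · intro h
    rw [totallyBounded_iff_subset]
    intro U hU
    by_contra hcon
    have key : ∀ s : Finset X, (∀ y ∈ s, y ∈ M) → ∃ z, z ∈ M ∧ ∀ y ∈ s, (z, y) ∉ U := by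
      intro s hs
      by_contra hz
      push Not at hz
      refine hcon ⟨(s : Set X), fun y hy => hs y hy, s.finite_toSet, fun z hzM => ?_⟩
      obtain ⟨y, hy, hyU⟩ := hz z hzM
      exact Set.mem_iUnion₂.2 ⟨y, hy, hyU⟩
    obtain ⟨x, hxM, hx⟩ := exists_seq_of_forall_finset_exists (fun y => y ∈ M)
      (fun y z => (z, y) ∉ U) key
    obtain ⟨F, hne, hC, hle⟩ := h x hxM
    obtain ⟨A, hA, hAU⟩ := (cauchy_iff.1 hC).2 U hU
    have hr : ∀ m, x '' Set.Ioi m ∈ F := fun m =>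
      hle (Filter.image_mem_map (Filter.Ioi_mem_atTop m))
    obtain ⟨_, hmA, m, -, rfl⟩ := hne.nonempty_of_mem (Filter.inter_mem hA (hr 0))
    obtain ⟨_, hnA, n, hn, rfl⟩ := hne.nonempty_of_mem (Filter.inter_mem hA (hr m))
    exact hx m n hn (hAU ⟨hnA, hmA⟩)
end

section
/- Let (X, 𝒰) be a compact uniform space satisfying von Neumann's countability axiom (A₀): there exists a sequence of entourages Uₙ ∈ 𝒰, n ∈ ℕ, with ⋂ₙ Uₙ = ⋂ 𝒰 (the intersection of all entourages). Then (X, 𝒰) satisfies the first countability axiom (A₁): there exists a sequence of entourages forming a basis of 𝒰, i.e. the uniformity filter of X is countably generated. -/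
/-- A compact uniform space satisfying von Neumann's countability axiom `(A₀)`
(there is a sequence of entourages whose intersection is the intersection of all
entourages) satisfies the first countability axiom `(A₁)`: some sequence of
entourages is a basis of the uniformity. -/
theorem compact_A0_implies_A1 {X : Type*} [UniformSpace X] [CompactSpace X]
    (U : ℕ → Set (X × X)) (hU : ∀ n, U n ∈ uniformity X)
    (hA0 : (⋂ n, U n) = ⋂ V ∈ uniformity X, V) :
    ∃ W : ℕ → Set (X × X), (∀ n, W n ∈ uniformity X) ∧
      ∀ V ∈ uniformity X, ∃ n, W n ⊆ V := by
  have h1 : ∀ n, ∃ C : Set (X × X), C ∈ uniformity X ∧ IsClosed C ∧ C ⊆ U n := by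
    intro n
    obtain ⟨t, ⟨ht, hc⟩, hs⟩ := uniformity_hasBasis_closed.mem_iff.1 (hU n)
    exact ⟨t, ht, hc, hs⟩
  choose C hC hcl hCU using h1
  refine ⟨fun n => ⋂ k ∈ Set.Iic n, C k, fun n => ?_, fun V hV => ?_⟩
  · exact (Filter.biInter_mem (Set.finite_Iic n)).2 fun k _ => hC k
  · obtain ⟨O, ⟨hO, hOo⟩, hOV⟩ := uniformity_hasBasis_open.mem_iff.1 hV
    have hanti : Antitone (fun n : ℕ => ⋂ k ∈ Set.Iic n, C k) := fun a b hab =>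
      Set.biInter_subset_biInter_left (Set.Iic_subset_Iic.2 hab)
    obtain ⟨n, hn⟩ := exists_subset_nhds_of_compactSpace
      (V := fun n : ℕ => ⋂ k ∈ Set.Iic n, C k) (U := O) hanti.directed_ge
      (fun n => isClosed_biInter fun k _ => hcl k) (by
        intro x hx
        refine hOo.mem_nhds ?_
        have hx2 : x ∈ ⋂ n, U n := Set.mem_iInter.2 fun n =>
          hCU n (Set.mem_iInter₂.1 (Set.mem_iInter.1 hx n) n (Set.mem_Iic.2 le_rfl))
        rw [hA0] at hx2
        exact Set.mem_iInter₂.1 hx2 O hO)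
    exact ⟨n, hn.trans hOV⟩
end
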